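/- Let n ≥ 1, let 1 ≤ p < ∞, and let Ω ⊆ ℝⁿ be a Lebesgue measurable set for which there exist τ > 1, points y_j ∈ ℝⁿ and radii R_j with R_j strictly increasing to ∞ such that B(y_j, τR_j) ⊆ Ω for all j ∈ ℕ and B(y_j, τR_j) ∩ B(y_k, τR_k) = ∅ for j ≠ k. Let a ∈ L^∞(ℝⁿ;ℂ) and suppose there is M ≥ 0 such that ‖F^{-1}(a·Fu)‖_{L^p(ℝⁿ)} ≤ M‖u‖_{L^p(ℝⁿ)} for all u ∈ L²(ℝⁿ) ∩ L^p(ℝⁿ). Then the set G := { W_Ω(a)u : u ∈ L²(Ω) ∩ L^p(Ω), ‖u‖_{L^p(Ω)} ≤ 1 } ⊆ L^p(Ω) satisfies κ(G) ≥ ‖a‖_{L^∞(ℝⁿ)}. -/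

import Mathlib

open MeasureTheory Filter Metric Complex ENNReal NNReal

noncomputable section

abbrev Eucl (n : ℕ) := EuclideanSpace ℝ (Fin n)

/-- The Fourier integral with the convention `(Fu)(ξ) = ∫ u(x) e^{-i x·ξ} dx`. -/
def fourierInt {n : ℕ} (u : Eucl n → ℂ) (ξ : Eucl n) : ℂ :=
  ∫ x : Eucl n, Complex.exp (-(Complex.I * ((inner ℝ x ξ : ℝ) : ℂ))) * u x

/-- The inverse Fourier integral `(F⁻¹u)(x) = (2π)^{-n} ∫ u(ξ) e^{i x·ξ} dξ`. -/
def fourierIntInv {n : ℕ} (u : Eucl n → ℂ) (x : Eucl n) : ℂ :=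
  (((2 * Real.pi) ^ n : ℝ)⁻¹ : ℂ) • ∫ ξ : Eucl n, Complex.exp (Complex.I * ((inner ℝ x ξ : ℝ) : ℂ)) * u ξ

/-- A pair consisting of the Fourier–Plancherel transform on `L²(ℝⁿ;ℂ)` and its inverse:
continuous linear maps on `L²` that are mutually inverse and agree with the Fourier
integral (resp. the inverse Fourier integral) on `L¹ ∩ L²`.  Such a pair exists and is
unique by Plancherel's theorem. -/
structure FourierPlancherelPair (n : ℕ) where
  F : Lp ℂ 2 (volume : Measure (Eucl n)) →L[ℂ] Lp ℂ 2 (volume : Measure (Eucl n))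
  Finv : Lp ℂ 2 (volume : Measure (Eucl n)) →L[ℂ] Lp ℂ 2 (volume : Measure (Eucl n))
  inv_comp : ∀ u, Finv (F u) = u
  comp_inv : ∀ u, F (Finv u) = u
  F_int : ∀ (u : Eucl n → ℂ), Integrable u → ∀ (hu2 : MemLp u 2 (volume : Measure (Eucl n))),
    (F (hu2.toLp u) : Eucl n → ℂ) =ᵐ[volume] fourierInt u
  Finv_int : ∀ (u : Eucl n → ℂ), Integrable u → ∀ (hu2 : MemLp u 2 (volume : Measure (Eucl n))),
    (Finv (hu2.toLp u) : Eucl n → ℂ) =ᵐ[volume] fourierIntInv u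

/-- Multiplication by an `L^∞` function as a map on `L²`. -/
def mulOp {n : ℕ} (a : Eucl n → ℂ) (ha : MemLp a ⊤ (volume : Measure (Eucl n)))
    (v : Lp ℂ 2 (volume : Measure (Eucl n))) : Lp ℂ 2 (volume : Measure (Eucl n)) :=
  (((Lp.memLp v).smul ha : MemLp (a • (v : Eucl n → ℂ)) 2 volume)).toLp _

/-- The Wiener–Hopf type operator `W_Ω(a) u = r_Ω F⁻¹ (a · F(e_Ω u))`, realised as a function
on `ℝⁿ` supported in `Ω` (i.e. `e_Ω W_Ω(a) u`). -/
def WOp {n : ℕ} (FP : FourierPlancherelPair n) (a : Eucl n → ℂ) (ha : MemLp a ⊤ (volume : Measure (Eucl n)))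
    (Ω : Set (Eucl n)) (u : Eucl n → ℂ) (hu : MemLp (Ω.indicator u) 2 (volume : Measure (Eucl n))) :
    Eucl n → ℂ :=
  Ω.indicator (FP.Finv (mulOp a ha (FP.F (hu.toLp _))) : Eucl n → ℂ)

end

/-!
Let `c < ‖a‖_∞` and pick a Lebesgue point `ξ₀` of `a` with `|a(ξ₀)| > c`. On a wave packet
`u(x) = e^{i x·ξ₀} φ(δx)` with `δ` small, `F⁻¹(a·Fu)` is uniformly close to `a(ξ₀) u`, so its `L^p`
norm over the ball carrying `u` is at least `c ‖u‖_p`. By the Riemann–Lebesgue lemma `F⁻¹(a·Fu)`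
tends to zero at infinity. Since `Ω` contains arbitrarily large balls, any number of translates of
`u` fit into `Ω` so far apart that their images are pairwise at `L^p` distance almost `c`; two of
them lie in the same set of a finite cover.
-/

section LpNorms

variable {α F : Type*} [MeasurableSpace α] [NormedAddCommGroup F] {μ : Measure α} {p : ℝ≥0∞}

theorem rpow_inv_toReal_le_self {x : ℝ≥0∞} (hx : 1 ≤ x) (hp : 1 ≤ p) : x ^ p.toReal⁻¹ ≤ x := by
  have exponent_le_one : p.toReal⁻¹ ≤ 1 := by
    rw [← ENNReal.toReal_inv]
    exact ENNReal.toReal_mono one_ne_top (ENNReal.inv_le_one.2 hp)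
  simpa only [ENNReal.rpow_one] using ENNReal.rpow_le_rpow_of_exponent_le hx exponent_le_one

theorem rpow_measure_le_eLpNorm {u : α → F} {s : Set α} (hs : MeasurableSet s) (hμs : μ s ≠ 0)
    (hp : p ≠ 0) (hu : ∀ x ∈ s, 1 ≤ ‖u x‖) : μ s ^ p.toReal⁻¹ ≤ eLpNorm u p μ := by
  calc μ s ^ p.toReal⁻¹ = eLpNorm (s.indicator fun _ => (1 : ℝ)) p μ := by
        rw [eLpNorm_indicator_const' hs hμs hp, enorm_one, one_mul, one_div]
    _ ≤ eLpNorm u p μ := by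
        refine eLpNorm_mono fun x => ?_
        by_cases hx : x ∈ s
        · simpa only [Set.indicator_of_mem hx, norm_one] using hu x hx
        · simpa only [Set.indicator_of_notMem hx, norm_zero] using norm_nonneg _

theorem eLpNorm_restrict_le_add_of_norm_sub_le {f g : α → F} {s : Set α} (hs : MeasurableSet s)
    (hf : AEStronglyMeasurable f μ) (hg : AEStronglyMeasurable g μ) (hp : 1 ≤ p) {ε : ℝ}
    (hfg : ∀ x ∈ s, ‖f x - g x‖ ≤ ε) :
    eLpNorm f p (μ.restrict s) ≤
      eLpNorm g p (μ.restrict s) + μ s ^ p.toReal⁻¹ * ENNReal.ofReal ε := by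
  have error_le : eLpNorm (f - g) p (μ.restrict s) ≤ μ s ^ p.toReal⁻¹ * ENNReal.ofReal ε := by
    simpa only [Measure.restrict_apply_univ] using
      eLpNorm_le_of_ae_bound (f := f - g) (p := p) (ae_restrict_of_forall_mem hs hfg)
  calc eLpNorm f p (μ.restrict s) = eLpNorm (g + (f - g)) p (μ.restrict s) := by
        rw [add_sub_cancel]
    _ ≤ eLpNorm g p (μ.restrict s) + eLpNorm (f - g) p (μ.restrict s) :=
        eLpNorm_add_le hg.restrict (hf.sub hg).restrict hp
    _ ≤ _ := by gcongr

theorem eLpNorm_comp_sub_restrict_ball {E : Type*} [NormedAddCommGroup E] [MeasurableSpace E]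
    [BorelSpace E] {ν : Measure E} [ν.IsAddRightInvariant] {h : E → F}
    (hh : AEStronglyMeasurable h ν) (z : E) (ρ : ℝ) :
    eLpNorm (fun x => h (x - z)) p (ν.restrict (ball z ρ)) =
      eLpNorm h p (ν.restrict (ball 0 ρ)) := by
  have preimage_ball : (fun x => x - z) ⁻¹' ball 0 ρ = ball z ρ := by
    ext x
    rw [Set.mem_preimage, mem_ball_zero_iff, mem_ball_iff_norm]
  have preserving := (measurePreserving_sub_right ν z).restrict_preimage
    (measurableSet_ball (x := (0 : E)) (ε := ρ))
  rw [preimage_ball] at preserving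
  exact eLpNorm_comp_measurePreserving hh.restrict preserving

theorem rpow_addHaar_ball_two_mul_le {E : Type*} [NormedAddCommGroup E] [NormedSpace ℝ E]
    [FiniteDimensional ℝ E] [MeasurableSpace E] [BorelSpace E] (ν : Measure E)
    [ν.IsAddHaarMeasure] (hp : 1 ≤ p) (r : ℝ) :
    ν (ball 0 (2 * r)) ^ p.toReal⁻¹ ≤
      2 ^ Module.finrank ℝ E * ν (ball 0 r) ^ p.toReal⁻¹ := by
  rw [Measure.addHaar_ball_mul_of_pos _ _ two_pos, ENNReal.ofReal_pow zero_le_two,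
    ENNReal.ofReal_ofNat, ENNReal.mul_rpow_of_nonneg _ _ (inv_nonneg.2 ENNReal.toReal_nonneg)]
  gcongr
  exact rpow_inv_toReal_le_self (one_le_pow₀ one_le_two) hp

end LpNorms

section LebesguePoints

open Topology

/-- `x` is a Lebesgue point of `f` with value `f x`: the means of `‖f - f x‖` over the closed balls
centred at `x` tend to zero with the radius. -/
def IsLebesguePoint {α F : Type*} [PseudoMetricSpace α] [MeasurableSpace α]
    [NormedAddCommGroup F] (μ : Measure α) (f : α → F) (x : α) : Prop :=
  Tendsto (fun r => ⨍ y in closedBall x r, ‖f y - f x‖ ∂μ) (𝓝[>] 0) (𝓝 0)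

theorem ae_isLebesguePoint {α F : Type*} [PseudoMetricSpace α] [MeasurableSpace α]
    [SecondCountableTopology α] [BorelSpace α] [NormedAddCommGroup F] {μ : Measure α}
    [IsUnifLocDoublingMeasure μ] [IsLocallyFiniteMeasure μ] {f : α → F}
    (hf : LocallyIntegrable f μ) : ∀ᵐ x ∂μ, IsLebesguePoint μ f x := by
  filter_upwards [IsUnifLocDoublingMeasure.ae_tendsto_average_norm_sub μ hf 1] with x hx
  refine hx (fun _ => x) id tendsto_id ?_
  filter_upwards [self_mem_nhdsWithin] with r hr
  simpa using le_of_lt hr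

theorem exists_isLebesguePoint_of_lt_eLpNorm_top {α F : Type*} [PseudoMetricSpace α]
    [MeasurableSpace α] [SecondCountableTopology α] [BorelSpace α] [NormedAddCommGroup F]
    {μ : Measure α} [IsUnifLocDoublingMeasure μ] [IsLocallyFiniteMeasure μ] {f : α → F}
    (hf : LocallyIntegrable f μ) {c : ℝ≥0∞} (hc : c < eLpNorm f ∞ μ) :
    ∃ x, c < ‖f x‖ₑ ∧ IsLebesguePoint μ f x := by
  have large : ∃ᶠ x in ae μ, c < ‖f x‖ₑ :=
    frequently_lt_of_lt_limsup (h := by rwa [eLpNorm_exponent_top] at hc)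
  exact (large.and_eventually (ae_isLebesguePoint hf)).exists

theorem tendsto_setIntegral_compl_closedBall_zero {α F : Type*} [PseudoMetricSpace α]
    [MeasurableSpace α] [OpensMeasurableSpace α] [NormedAddCommGroup F] [NormedSpace ℝ F]
    {μ : Measure α} {g : α → F} (hg : Integrable g μ) (x : α) :
    Tendsto (fun K => ∫ y in (closedBall x K)ᶜ, g y ∂μ) atTop (𝓝 0) := by
  have cover : Tendsto (fun K => ∫ y in closedBall x K, g y ∂μ) atTop (𝓝 (∫ y, g y ∂μ)) :=
    (aecover_closedBall tendsto_id).integral_tendsto_of_countably_generated hg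
  have tail := cover.const_sub (∫ y, g y ∂μ)
  rw [sub_self] at tail
  refine tail.congr fun K => ?_
  rw [← integral_add_compl (measurableSet_closedBall (x := x) (ε := K)) hg, add_sub_cancel_left]

theorem ae_norm_sub_const_le {α F : Type*} [MeasurableSpace α] [NormedAddCommGroup F]
    {μ : Measure α} {f : α → F} (hf : MemLp f ∞ μ) (b : F) :
    ∀ᵐ y ∂μ, ‖f y - b‖ ≤ lpNorm f ∞ μ + ‖b‖ := by
  filter_upwards [ae_le_lpNorm_exponent_top hf] with y hy
  exact (norm_sub_le _ _).trans (by gcongr)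

variable {E F G : Type*} [NormedAddCommGroup E] [NormedSpace ℝ E] [FiniteDimensional ℝ E]
  [MeasurableSpace E] [BorelSpace E] {μ : Measure E} [μ.IsAddHaarMeasure]
  [NormedAddCommGroup F] [NormedAddCommGroup G]

theorem quasiMeasurePreserving_add_smul (x : E) {δ : ℝ} (hδ : δ ≠ 0) :
    Measure.QuasiMeasurePreserving (fun y => x + δ • y) μ μ :=
  (measurePreserving_add_left μ x).quasiMeasurePreserving.comp
    (Measure.quasiMeasurePreserving_smul μ hδ)

theorem setIntegral_closedBall_comp_add_smul [NormedSpace ℝ F] (f : E → F) (x : E) {δ K : ℝ}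
    (hδ : 0 < δ) (hK : 0 < K) :
    ∫ y in closedBall 0 K, f (x + δ • y) ∂μ =
      μ.real (closedBall 0 K) • ⨍ y in closedBall x (δ * K), f y ∂μ := by
  have translate : ∫ y in closedBall 0 (δ * K), f (x + y) ∂μ =
      ∫ y in closedBall x (δ * K), f y ∂μ := by
    simpa only [preimage_add_closedBall, sub_self] using
      (measurePreserving_add_left μ x).setIntegral_preimage_emb (measurableEmbedding_addLeft x) f
        (closedBall x (δ * K))
  have volume_ball : 0 < μ.real (ball (0 : E) 1) :=
    ENNReal.toReal_pos (measure_ball_pos μ _ one_pos).ne' measure_ball_lt_top.ne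
  rw [Measure.setIntegral_comp_smul_of_pos μ (fun y => f (x + y)) _ hδ,
    smul_closedBall δ (0 : E) hK.le, smul_zero, Real.norm_of_nonneg hδ.le, translate,
    setAverage_eq, smul_smul, Measure.addHaar_real_closedBall μ _ hK.le,
    Measure.addHaar_real_closedBall μ _ (by positivity)]
  congr 1
  rw [mul_pow]
  field_simp

theorem IsLebesguePoint.tendsto_setIntegral_closedBall {f : E → F} {x : E}
    (hx : IsLebesguePoint μ f x) {K : ℝ} (hK : 0 < K) :
    Tendsto (fun δ : ℝ => ∫ y in closedBall 0 K, ‖f (x + δ • y) - f x‖ ∂μ) (𝓝[>] 0) (𝓝 0) := by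
  have radius : Tendsto (fun δ : ℝ => δ * K) (𝓝[>] 0) (𝓝[>] 0) := by
    refine tendsto_nhdsWithin_iff.2 ⟨?_, ?_⟩
    · exact (Continuous.tendsto' (by fun_prop) 0 0 (zero_mul K)).mono_left nhdsWithin_le_nhds
    · filter_upwards [self_mem_nhdsWithin] with δ hδ using mul_pos hδ hK
  have means := (hx.comp radius).const_mul (μ.real (closedBall 0 K))
  rw [mul_zero] at means
  refine means.congr' ?_
  filter_upwards [self_mem_nhdsWithin] with δ hδ
  exact (setIntegral_closedBall_comp_add_smul (fun y => ‖f y - f x‖) x hδ hK).symm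

theorem integral_norm_sub_mul_norm_le {f : E → F} (hf : MemLp f ∞ μ) {g : E → G}
    (hg : Integrable g μ) {C : ℝ} (hC : ∀ y, ‖g y‖ ≤ C) (x : E) {δ : ℝ} (hδ : δ ≠ 0) (K : ℝ) :
    ∫ y, ‖f (x + δ • y) - f x‖ * ‖g y‖ ∂μ ≤
      C * ∫ y in closedBall 0 K, ‖f (x + δ • y) - f x‖ ∂μ +
        (lpNorm f ∞ μ + ‖f x‖) * ∫ y in (closedBall 0 K)ᶜ, ‖g y‖ ∂μ := by
  have meas : AEStronglyMeasurable (fun y => ‖f (x + δ • y) - f x‖) μ :=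
    ((hf.1.comp_quasiMeasurePreserving (quasiMeasurePreserving_add_smul x hδ)).sub
      aestronglyMeasurable_const).norm
  have bound : ∀ᵐ y ∂μ, ‖f (x + δ • y) - f x‖ ≤ lpNorm f ∞ μ + ‖f x‖ :=
    (quasiMeasurePreserving_add_smul x hδ).ae (ae_norm_sub_const_le hf (f x))
  have integrable_mul : Integrable (fun y => ‖f (x + δ • y) - f x‖ * ‖g y‖) μ :=
    hg.norm.bdd_mul meas (by simpa only [norm_norm] using bound)
  have integrableOn_ball : IntegrableOn (fun y => ‖f (x + δ • y) - f x‖) (closedBall 0 K) μ :=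
    Measure.integrableOn_of_bounded measure_closedBall_lt_top.ne meas
      (by simpa only [norm_norm] using ae_restrict_of_ae bound)
  rw [← integral_add_compl measurableSet_closedBall integrable_mul, ← integral_const_mul,
    ← integral_const_mul]
  refine add_le_add (setIntegral_mono integrable_mul.integrableOn (integrableOn_ball.const_mul C)
    fun y => ?_) (setIntegral_mono_ae integrable_mul.integrableOn
      (hg.norm.integrableOn.const_mul _) ?_)
  · rw [mul_comm C]
    gcongr
    exact hC y
  · filter_upwards [bound] with y hy
    gcongr

theorem IsLebesguePoint.tendsto_integral_mul_norm {f : E → F} {x : E}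
    (hx : IsLebesguePoint μ f x) (hf : MemLp f ∞ μ) {g : E → G} (hg : Integrable g μ) {C : ℝ}
    (hC : ∀ y, ‖g y‖ ≤ C) :
    Tendsto (fun δ : ℝ => ∫ y, ‖f (x + δ • y) - f x‖ * ‖g y‖ ∂μ) (𝓝[>] 0) (𝓝 0) := by
  refine tendsto_order.2 ⟨fun ε hε => ?_, fun ε hε => ?_⟩
  · exact Eventually.of_forall fun δ => hε.trans_le (by positivity)
  have tail := (tendsto_setIntegral_compl_closedBall_zero hg.norm 0).const_mul
    (lpNorm f ∞ μ + ‖f x‖)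
  rw [mul_zero] at tail
  obtain ⟨K, tail_lt, hK⟩ :=
    ((tail.eventually_lt_const (half_pos hε)).and (eventually_gt_atTop 0)).exists
  have core := (hx.tendsto_setIntegral_closedBall hK).const_mul C
  rw [mul_zero] at core
  filter_upwards [core.eventually_lt_const (half_pos hε), self_mem_nhdsWithin] with δ core_lt hδ
  linarith [integral_norm_sub_mul_norm_le hf hg hC x (ne_of_gt hδ) K]

end LebesguePoints

section FourierIntegrals

open Topology FourierTransform

variable {n : ℕ}

theorem norm_cexp_I_mul_inner (x ξ : Eucl n) : ‖cexp (I * ((inner ℝ x ξ : ℝ) : ℂ))‖ = 1 :=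
  Complex.norm_exp_I_mul_ofReal _

theorem fourierInt_eq_fourier (u : Eucl n → ℂ) (ξ : Eucl n) :
    fourierInt u ξ = 𝓕 u ((2 * Real.pi)⁻¹ • ξ) := by
  rw [fourierInt, Real.fourier_eq']
  refine integral_congr_ae (Eventually.of_forall fun x => ?_)
  have phase : -2 * Real.pi * inner ℝ x ((2 * Real.pi)⁻¹ • ξ) = -inner ℝ x ξ := by
    rw [inner_smul_right]
    field_simp
  simp only [phase, smul_eq_mul, Complex.ofReal_neg]
  ring_nf

theorem fourierIntInv_eq_fourierInv (u : Eucl n → ℂ) (x : Eucl n) :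
    fourierIntInv u x =
      (((2 * Real.pi) ^ n : ℝ)⁻¹ : ℂ) • 𝓕⁻ u ((2 * Real.pi)⁻¹ • x) := by
  rw [fourierIntInv, Real.fourierInv_eq']
  congr 1
  refine integral_congr_ae (Eventually.of_forall fun ξ => ?_)
  have phase : 2 * Real.pi * inner ℝ ξ ((2 * Real.pi)⁻¹ • x) = inner ℝ x ξ := by
    rw [inner_smul_right, real_inner_comm]
    field_simp
  simp only [phase, smul_eq_mul, mul_comm I]

theorem norm_fourierInt_le (u : Eucl n → ℂ) (ξ : Eucl n) : ‖fourierInt u ξ‖ ≤ ∫ x, ‖u x‖ := by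
  rw [fourierInt_eq_fourier]
  exact VectorFourier.norm_fourierIntegral_le_integral_norm _ _ _ _ _

theorem norm_fourierIntInv_le (u : Eucl n → ℂ) (x : Eucl n) :
    ‖fourierIntInv u x‖ ≤ ∫ ξ, ‖u ξ‖ := by
  have constant_le : ‖(((2 * Real.pi) ^ n : ℝ)⁻¹ : ℂ)‖ ≤ 1 := by
    rw [norm_inv, Complex.norm_real, Real.norm_of_nonneg (by positivity)]
    exact inv_le_one_of_one_le₀ (one_le_pow₀ (by linarith [Real.pi_gt_three]))
  rw [fourierIntInv_eq_fourierInv, norm_smul]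
  exact (mul_le_of_le_one_left (norm_nonneg _) constant_le).trans
    (VectorFourier.norm_fourierIntegral_le_integral_norm _ _ _ _ _)

theorem continuous_fourierIntInv {u : Eucl n → ℂ} (hu : Integrable u) :
    Continuous (fourierIntInv u) := by
  have transform : Continuous (𝓕⁻ u) :=
    VectorFourier.fourierIntegral_continuous Real.continuous_fourierChar
      (continuous_inner (𝕜 := ℝ)).neg hu
  rw [funext (fourierIntInv_eq_fourierInv u)]
  fun_prop

theorem tendsto_fourierIntInv_cocompact (u : Eucl n → ℂ) :
    Tendsto (fourierIntInv u) (cocompact (Eucl n)) (𝓝 0) := by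
  have scaling : Tendsto (fun x : Eucl n => -((2 * Real.pi)⁻¹ • x)) (cocompact _) (cocompact _) :=
    ((Homeomorph.smulOfNeZero (2 * Real.pi)⁻¹ (by positivity)).trans
      (Homeomorph.neg _)).isClosedEmbedding.tendsto_cocompact
  have decay := ((tendsto_integral_exp_inner_smul_cocompact u).comp scaling).const_smul
    (((2 * Real.pi) ^ n : ℝ)⁻¹ : ℂ)
  rw [smul_zero] at decay
  refine decay.congr fun x => ?_
  rw [fourierIntInv_eq_fourierInv, Real.fourierInv_eq_fourier_neg, Real.fourier_eq]
  rfl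

theorem integrable_cexp_inner_mul {u : Eucl n → ℂ} (hu : Integrable u) (x : Eucl n) :
    Integrable fun ξ => cexp (I * ((inner ℝ x ξ : ℝ) : ℂ)) * u ξ :=
  hu.bdd_mul (c := 1) (by fun_prop)
    (Eventually.of_forall fun ξ => (norm_cexp_I_mul_inner x ξ).le)

theorem fourierIntInv_sub {u v : Eucl n → ℂ} (hu : Integrable u) (hv : Integrable v)
    (x : Eucl n) :
    fourierIntInv (fun ξ => u ξ - v ξ) x = fourierIntInv u x - fourierIntInv v x := by
  simp only [fourierIntInv, mul_sub, ← smul_sub]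
  rw [integral_sub (integrable_cexp_inner_mul hu x) (integrable_cexp_inner_mul hv x)]

theorem fourierIntInv_const_mul (t : ℂ) (u : Eucl n → ℂ) (x : Eucl n) :
    fourierIntInv (fun ξ => t * u ξ) x = t * fourierIntInv u x := by
  simp only [fourierIntInv, smul_eq_mul, mul_left_comm _ t, integral_const_mul]

theorem fourierInt_const_mul (t : ℂ) (u : Eucl n → ℂ) (ξ : Eucl n) :
    fourierInt (fun x => t * u x) ξ = t * fourierInt u ξ := by
  simp only [fourierInt, mul_left_comm _ t, integral_const_mul]

theorem fourierInt_comp_sub (u : Eucl n → ℂ) (y ξ : Eucl n) :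
    fourierInt (fun x => u (x - y)) ξ =
      cexp (-(I * ((inner ℝ y ξ : ℝ) : ℂ))) * fourierInt u ξ := by
  simp only [fourierInt]
  rw [← integral_const_mul, ← integral_sub_right_eq_self
    (fun x => cexp (-(I * ((inner ℝ y ξ : ℝ) : ℂ))) *
      (cexp (-(I * ((inner ℝ x ξ : ℝ) : ℂ))) * u x)) y]
  refine integral_congr_ae (Eventually.of_forall fun x => ?_)
  simp only [← mul_assoc, ← Complex.exp_add, inner_sub_left, Complex.ofReal_sub]
  ring_nf

theorem fourierIntInv_cexp_mul (u : Eucl n → ℂ) (y x : Eucl n) :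
    fourierIntInv (fun ξ => cexp (-(I * ((inner ℝ y ξ : ℝ) : ℂ))) * u ξ) x =
      fourierIntInv u (x - y) := by
  simp only [fourierIntInv, ← mul_assoc, ← Complex.exp_add, inner_sub_left, Complex.ofReal_sub,
    ← sub_eq_add_neg, mul_sub]

theorem fourierInv_comp_smul (u : Eucl n → ℂ) {s : ℝ} (hs : 0 ≤ s) (x : Eucl n) :
    𝓕⁻ (fun ξ => u (s • ξ)) (s • x) = (s ^ n)⁻¹ • 𝓕⁻ u x := by
  have change_of_variables := Measure.integral_comp_smul_of_nonneg volume
    (fun ξ => Real.fourierChar (inner ℝ ξ x) • u ξ) s (hR := hs)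
  rw [finrank_euclideanSpace_fin] at change_of_variables
  simp only [Real.fourierInv_eq, ← change_of_variables, inner_smul_left, inner_smul_right,
    conj_trivial]

theorem fourierIntInv_fourierInt {u : Eucl n → ℂ} (hcont : Continuous u) (hu : Integrable u)
    (hFu : Integrable (fourierInt u)) : fourierIntInv (fourierInt u) = u := by
  have two_pi_ne_zero : 2 * Real.pi ≠ 0 := by positivity
  have integrable_fourier : Integrable (𝓕 u) := by
    rw [← integrable_comp_smul_iff volume _ (inv_ne_zero two_pi_ne_zero)]
    exact hFu.congr (Eventually.of_forall (fourierInt_eq_fourier u))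
  ext x
  rw [fourierIntInv_eq_fourierInv, funext (fourierInt_eq_fourier u),
    fourierInv_comp_smul (𝓕 u) (by positivity), hcont.fourierInv_fourier_eq hu integrable_fourier,
    inv_pow, inv_inv, Complex.real_smul, smul_eq_mul, inv_mul_cancel_left₀]
  exact_mod_cast pow_ne_zero n two_pi_ne_zero

theorem integrable_fourierInt_of_contDiff {u : Eucl n → ℂ} (hu : ContDiff ℝ (⊤ : ℕ∞) u)
    (hsupp : HasCompactSupport u) : Integrable (fourierInt u) := by
  have integrable_fourier : Integrable (𝓕 u) := by
    simpa only [SchwartzMap.fourier_coe] using (𝓕 (hsupp.toSchwartzMap hu)).integrable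
  rw [funext (fourierInt_eq_fourier u)]
  exact integrable_fourier.comp_smul (by positivity)

end FourierIntegrals

section FourierMultipliers

open Topology

variable {n : ℕ}

/-- A smooth, compactly supported, complex-valued function on `ℝⁿ`: the class on which the Fourier
transform and its inverse are absolutely convergent integrals. -/
structure IsTestFunction (v : Eucl n → ℂ) : Prop where
  contDiff : ContDiff ℝ (⊤ : ℕ∞) v
  hasCompactSupport : HasCompactSupport v

namespace IsTestFunction

variable {v : Eucl n → ℂ}

theorem memLp (hv : IsTestFunction v) (p : ℝ≥0∞) : MemLp v p :=
  hv.contDiff.continuous.memLp_of_hasCompactSupport hv.hasCompactSupport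

theorem integrable (hv : IsTestFunction v) : Integrable v :=
  memLp_one_iff_integrable.1 (hv.memLp 1)

theorem integrable_fourierInt (hv : IsTestFunction v) : Integrable (fourierInt v) :=
  integrable_fourierInt_of_contDiff hv.contDiff hv.hasCompactSupport

theorem const_mul (hv : IsTestFunction v) (t : ℂ) : IsTestFunction fun x => t * v x where
  contDiff := contDiff_const.mul hv.contDiff
  hasCompactSupport := hv.hasCompactSupport.mul_left (f := fun _ => t)

theorem comp_sub (hv : IsTestFunction v) (z : Eucl n) : IsTestFunction fun x => v (x - z) where
  contDiff := hv.contDiff.comp (contDiff_id.sub contDiff_const)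
  hasCompactSupport := hv.hasCompactSupport.comp_homeomorph (Homeomorph.subRight z)

end IsTestFunction

theorem exists_isTestFunction_cutoff (n : ℕ) :
    ∃ φ : Eucl n → ℂ, IsTestFunction φ ∧ (∀ x ∈ ball 0 1, φ x = 1) ∧
      Function.support φ ⊆ ball 0 2 := by
  let bump : ContDiffBump (0 : Eucl n) := ⟨1, 2, one_pos, one_lt_two⟩
  refine ⟨fun x => (bump x : ℂ), ⟨Complex.ofRealCLM.contDiff.comp bump.contDiff,
    bump.hasCompactSupport.comp_left Complex.ofReal_zero⟩, fun x hx => ?_, fun x hx => ?_⟩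
  · exact congrArg Complex.ofReal (bump.one_of_mem_closedBall (ball_subset_closedBall hx))
  · rw [← bump.support_eq]
    exact Complex.ofReal_ne_zero.1 hx

/-- The Fourier multiplier `F⁻¹(a · Fv)` with symbol `a`, written with Fourier integrals and hence
defined at every point rather than almost everywhere. -/
noncomputable def fourierMultiplier (a v : Eucl n → ℂ) : Eucl n → ℂ :=
  fourierIntInv fun ξ => a ξ * fourierInt v ξ

theorem fourierMultiplier_const_mul (a : Eucl n → ℂ) (t : ℂ) (v : Eucl n → ℂ) (x : Eucl n) :
    fourierMultiplier a (fun y => t * v y) x = t * fourierMultiplier a v x := by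
  simp only [fourierMultiplier, fourierInt_const_mul, mul_left_comm _ t, fourierIntInv_const_mul]

theorem fourierMultiplier_comp_sub (a v : Eucl n → ℂ) (z x : Eucl n) :
    fourierMultiplier a (fun y => v (y - z)) x = fourierMultiplier a v (x - z) := by
  simp only [fourierMultiplier, fourierInt_comp_sub, mul_left_comm (a _), fourierIntInv_cexp_mul]

theorem tendsto_fourierMultiplier_cocompact (a v : Eucl n → ℂ) :
    Tendsto (fourierMultiplier a v) (cocompact (Eucl n)) (𝓝 0) :=
  tendsto_fourierIntInv_cocompact _

variable {a v : Eucl n → ℂ}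

theorem integrable_mul_fourierInt (ha : MemLp a ∞) (hv : IsTestFunction v) :
    Integrable fun ξ => a ξ * fourierInt v ξ :=
  hv.integrable_fourierInt.bdd_mul ha.1 (ae_le_lpNorm_exponent_top ha)

theorem continuous_fourierMultiplier (ha : MemLp a ∞) (hv : IsTestFunction v) :
    Continuous (fourierMultiplier a v) :=
  continuous_fourierIntInv (integrable_mul_fourierInt ha hv)

theorem finv_mulOp_f_ae_eq_fourierMultiplier (FP : FourierPlancherelPair n) (ha : MemLp a ∞)
    (hv : IsTestFunction v) :
    FP.Finv (mulOp a ha (FP.F ((hv.memLp 2).toLp v))) =ᵐ[volume] fourierMultiplier a v := by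
  have product : a • (FP.F ((hv.memLp 2).toLp v) : Eucl n → ℂ) =ᵐ[volume]
      fun ξ => a ξ * fourierInt v ξ := by
    filter_upwards [FP.F_int v hv.integrable (hv.memLp 2)] with ξ hξ
    rw [Pi.smul_apply', hξ, smul_eq_mul]
  have memLp_product : MemLp (fun ξ => a ξ * fourierInt v ξ) 2 :=
    (memLp_congr_ae product).1 ((Lp.memLp _).smul ha)
  have mulOp_eq : mulOp a ha (FP.F ((hv.memLp 2).toLp v)) = memLp_product.toLp _ :=
    (MemLp.toLp_eq_toLp_iff _ _).2 product
  rw [mulOp_eq]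
  exact FP.Finv_int _ (integrable_mul_fourierInt ha hv) memLp_product

theorem norm_fourierMultiplier_sub_const_mul_le (ha : MemLp a ∞) (hv : IsTestFunction v) (b : ℂ)
    (x : Eucl n) :
    ‖fourierMultiplier a v x - b * v x‖ ≤ ∫ ξ, ‖a ξ - b‖ * ‖fourierInt v ξ‖ := by
  have inversion : b * v x = fourierIntInv (fun ξ => b * fourierInt v ξ) x := by
    rw [fourierIntInv_const_mul, fourierIntInv_fourierInt hv.contDiff.continuous hv.integrable
      hv.integrable_fourierInt]
  rw [inversion, fourierMultiplier, ← fourierIntInv_sub (integrable_mul_fourierInt ha hv)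
    (hv.integrable_fourierInt.const_mul b)]
  refine (norm_fourierIntInv_le _ x).trans_eq ?_
  simp only [← sub_mul, norm_mul]

end FourierMultipliers

section WavePackets

variable {n : ℕ} {φ : Eucl n → ℂ}

/-- The wave packet of frequency `ξ₀`, width `δ⁻¹` and profile `φ`: as `δ → 0`, its Fourier
transform concentrates at `ξ₀`. -/
noncomputable def wavePacket (φ : Eucl n → ℂ) (ξ₀ : Eucl n) (δ : ℝ) (x : Eucl n) : ℂ :=
  cexp (I * ((inner ℝ x ξ₀ : ℝ) : ℂ)) * φ (δ • x)

theorem norm_wavePacket (φ : Eucl n → ℂ) (ξ₀ : Eucl n) (δ : ℝ) (x : Eucl n) :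
    ‖wavePacket φ ξ₀ δ x‖ = ‖φ (δ • x)‖ := by
  rw [wavePacket, norm_mul, norm_cexp_I_mul_inner, one_mul]

theorem IsTestFunction.wavePacket (hφ : IsTestFunction φ) (ξ₀ : Eucl n) {δ : ℝ} (hδ : δ ≠ 0) :
    IsTestFunction (wavePacket φ ξ₀ δ) where
  contDiff := by
    have phase : ContDiff ℝ (⊤ : ℕ∞) fun x : Eucl n => ((inner ℝ x ξ₀ : ℝ) : ℂ) :=
      Complex.ofRealCLM.contDiff.comp (contDiff_id.inner ℝ contDiff_const)
    exact (contDiff_const.mul phase).cexp.mul (hφ.contDiff.comp (contDiff_const_smul δ))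
  hasCompactSupport := (hφ.hasCompactSupport.comp_smul hδ).mul_left

theorem support_wavePacket_subset {r : ℝ} (hφ : Function.support φ ⊆ ball 0 r) (ξ₀ : Eucl n)
    {δ : ℝ} (hδ : 0 < δ) : Function.support (wavePacket φ ξ₀ δ) ⊆ ball 0 (r * δ⁻¹) := by
  intro x hx
  have scaled_mem : δ • x ∈ ball 0 r := hφ (right_ne_zero_of_mul hx)
  rw [mem_ball_zero_iff, norm_smul, Real.norm_of_nonneg hδ.le, mul_comm] at scaled_mem
  rwa [mem_ball_zero_iff, ← div_eq_mul_inv, lt_div_iff₀ hδ]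

theorem fourierInt_wavePacket (φ : Eucl n → ℂ) (ξ₀ : Eucl n) {δ : ℝ} (hδ : 0 < δ) (ξ : Eucl n) :
    fourierInt (wavePacket φ ξ₀ δ) ξ = (δ ^ n)⁻¹ • fourierInt φ (δ⁻¹ • (ξ - ξ₀)) := by
  have change_of_variables := Measure.integral_comp_smul_of_nonneg volume
    (fun x => cexp (-(I * ((inner ℝ x (δ⁻¹ • (ξ - ξ₀)) : ℝ) : ℂ))) * φ x) δ (hR := hδ.le)
  rw [finrank_euclideanSpace_fin] at change_of_variables
  rw [fourierInt, fourierInt, ← change_of_variables]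
  refine integral_congr_ae (Eventually.of_forall fun x => ?_)
  have phase : inner ℝ (δ • x) (δ⁻¹ • (ξ - ξ₀)) = inner ℝ x ξ - inner ℝ x ξ₀ := by
    rw [real_inner_smul_left, real_inner_smul_right, mul_inv_cancel_left₀ hδ.ne', inner_sub_right]
  simp only [wavePacket, phase, ← mul_assoc, ← Complex.exp_add, Complex.ofReal_sub]
  ring_nf

theorem integral_mul_norm_fourierInt_wavePacket (w : Eucl n → ℝ) (φ : Eucl n → ℂ) (ξ₀ : Eucl n)
    {δ : ℝ} (hδ : 0 < δ) :
    ∫ ξ, w ξ * ‖fourierInt (wavePacket φ ξ₀ δ) ξ‖ = ∫ η, w (ξ₀ + δ • η) * ‖fourierInt φ η‖ := by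
  have change_of_variables := Measure.integral_comp_smul_of_nonneg volume
    (fun ζ => w (ξ₀ + ζ) * ‖fourierInt φ (δ⁻¹ • ζ)‖) δ (hR := hδ.le)
  simp only [inv_smul_smul₀ hδ.ne', finrank_euclideanSpace_fin] at change_of_variables
  rw [change_of_variables, ← integral_add_left_eq_self _ ξ₀, smul_eq_mul, ← integral_const_mul]
  refine integral_congr_ae (Eventually.of_forall fun ζ => ?_)
  simp only [fourierInt_wavePacket φ ξ₀ hδ, add_sub_cancel_left, norm_smul, norm_inv, norm_pow,
    Real.norm_of_nonneg hδ.le, mul_left_comm]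

theorem exists_norm_fourierMultiplier_wavePacket_sub_le {a : Eucl n → ℂ} (ha : MemLp a ∞)
    {ξ₀ : Eucl n} (hξ₀ : IsLebesguePoint volume a ξ₀) (hφ : IsTestFunction φ) {ε : ℝ}
    (hε : 0 < ε) :
    ∃ δ > 0, ∀ x, ‖fourierMultiplier a (wavePacket φ ξ₀ δ) x - a ξ₀ * wavePacket φ ξ₀ δ x‖ ≤ ε := by
  obtain ⟨δ, error_lt, hδ⟩ :=
    (((hξ₀.tendsto_integral_mul_norm ha hφ.integrable_fourierInt
      (norm_fourierInt_le φ)).eventually_lt_const hε).and self_mem_nhdsWithin).exists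
  refine ⟨δ, hδ, fun x => ?_⟩
  calc ‖fourierMultiplier a (wavePacket φ ξ₀ δ) x - a ξ₀ * wavePacket φ ξ₀ δ x‖
      ≤ ∫ ξ, ‖a ξ - a ξ₀‖ * ‖fourierInt (wavePacket φ ξ₀ δ) ξ‖ :=
        norm_fourierMultiplier_sub_const_mul_le ha (hφ.wavePacket ξ₀ (ne_of_gt hδ)) _ x
    _ = ∫ η, ‖a (ξ₀ + δ • η) - a ξ₀‖ * ‖fourierInt φ η‖ :=
        integral_mul_norm_fourierInt_wavePacket (fun ξ => ‖a ξ - a ξ₀‖) φ ξ₀ hδ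
    _ ≤ ε := error_lt.le

end WavePackets

section NearExtremizers

variable {n : ℕ} {φ a : Eucl n → ℂ} {p : ℝ≥0∞}

theorem rpow_volume_ball_le_eLpNorm_wavePacket (hp : 1 ≤ p) (hφ : ∀ x ∈ ball 0 1, φ x = 1)
    (ξ₀ : Eucl n) {δ : ℝ} (hδ : 0 < δ) :
    volume (ball (0 : Eucl n) δ⁻¹) ^ p.toReal⁻¹ ≤ eLpNorm (wavePacket φ ξ₀ δ) p := by
  refine rpow_measure_le_eLpNorm measurableSet_ball
    (measure_ball_pos _ _ (inv_pos.2 hδ)).ne' (one_pos.trans_le hp).ne' fun x hx => ?_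
  have scaled_mem : δ • x ∈ ball (0 : Eucl n) 1 := by
    rw [mem_ball_zero_iff, ← one_div, lt_div_iff₀ hδ] at hx
    rwa [mem_ball_zero_iff, norm_smul, Real.norm_of_nonneg hδ.le, mul_comm]
  rw [norm_wavePacket, hφ _ scaled_mem, norm_one]

theorem enorm_mul_eLpNorm_wavePacket_le (hp : 1 ≤ p) (hφ : IsTestFunction φ)
    (hφ_one : ∀ x ∈ ball 0 1, φ x = 1) (hφ_supp : Function.support φ ⊆ ball 0 2) (ξ₀ : Eucl n)
    {δ : ℝ} (hδ : 0 < δ) {h : Eucl n → ℂ} (hh : AEStronglyMeasurable h) (b : ℂ) {ε : ℝ≥0}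
    (hε : ∀ x, ‖h x - b * wavePacket φ ξ₀ δ x‖ ≤ ε) :
    ‖b‖ₑ * eLpNorm (wavePacket φ ξ₀ δ) p ≤
      eLpNorm h p (volume.restrict (ball 0 (2 * δ⁻¹))) +
        ε * 2 ^ n * eLpNorm (wavePacket φ ξ₀ δ) p := by
  have meas : AEStronglyMeasurable (b • wavePacket φ ξ₀ δ) :=
    ((hφ.wavePacket ξ₀ hδ.ne').memLp p).1.const_smul b
  have approx := eLpNorm_restrict_le_add_of_norm_sub_le
    (measurableSet_ball (x := (0 : Eucl n)) (ε := 2 * δ⁻¹)) meas hh hp (ε := ε) fun x _ => by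
      rw [norm_sub_rev]
      exact hε x
  rw [eLpNorm_const_smul, eLpNorm_restrict_eq_of_support_subset
    (support_wavePacket_subset hφ_supp ξ₀ hδ), ENNReal.ofReal_coe_nnreal] at approx
  refine approx.trans ?_
  rw [mul_comm _ (ε : ℝ≥0∞), mul_assoc (ε : ℝ≥0∞)]
  gcongr
  refine (rpow_addHaar_ball_two_mul_le volume hp δ⁻¹).trans ?_
  rw [finrank_euclideanSpace_fin]
  gcongr
  exact rpow_volume_ball_le_eLpNorm_wavePacket hp hφ_one ξ₀ hδ

theorem exists_mul_eLpNorm_le_eLpNorm_fourierMultiplier (hp : 1 ≤ p) (ha : MemLp a ∞)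
    {c : ℝ≥0∞} (hc : c < eLpNorm a ∞) :
    ∃ u ρ, IsTestFunction u ∧ Function.support u ⊆ ball 0 ρ ∧ eLpNorm u p ≠ 0 ∧
      c * eLpNorm u p ≤ eLpNorm (fourierMultiplier a u) p (volume.restrict (ball 0 ρ)) := by
  obtain ⟨ξ₀, hcξ₀, hξ₀⟩ := exists_isLebesguePoint_of_lt_eLpNorm_top
    (ha.locallyIntegrable le_top) hc
  obtain ⟨φ, hφ, hφ_one, hφ_supp⟩ := exists_isTestFunction_cutoff n
  have two_pow_ne_top : (2 : ℝ≥0∞) ^ n ≠ ∞ := ENNReal.pow_ne_top ENNReal.ofNat_ne_top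
  obtain ⟨ε, hε, ε_lt⟩ := ENNReal.exists_nnreal_pos_mul_lt two_pow_ne_top
    (tsub_pos_of_lt hcξ₀).ne'
  obtain ⟨δ, hδ, error_le⟩ := exists_norm_fourierMultiplier_wavePacket_sub_le ha hξ₀ hφ
    (NNReal.coe_pos.2 hε)
  have hu : IsTestFunction (wavePacket φ ξ₀ δ) := hφ.wavePacket ξ₀ hδ.ne'
  refine ⟨wavePacket φ ξ₀ δ, 2 * δ⁻¹, hu, support_wavePacket_subset hφ_supp ξ₀ hδ, ?_, ?_⟩
  · refine (lt_of_lt_of_le ?_ (rpow_volume_ball_le_eLpNorm_wavePacket hp hφ_one ξ₀ hδ)).ne'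
    exact ENNReal.rpow_pos (measure_ball_pos _ _ (inv_pos.2 hδ)) measure_ball_lt_top.ne
  have error_ne_top : ε * 2 ^ n * eLpNorm (wavePacket φ ξ₀ δ) p ≠ ∞ :=
    ENNReal.mul_ne_top ε_lt.ne_top (hu.memLp p).eLpNorm_ne_top
  rw [← ENNReal.add_le_add_iff_right error_ne_top, ← add_mul]
  refine le_trans ?_ (enorm_mul_eLpNorm_wavePacket_le hp hφ hφ_one hφ_supp ξ₀ hδ
    (continuous_fourierMultiplier ha hu).aestronglyMeasurable (a ξ₀) error_le)
  gcongr
  exact (add_comm _ _).trans_le (lt_tsub_iff_right.1 ε_lt).le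

theorem exists_le_eLpNorm_fourierMultiplier (hp : 1 ≤ p) (ha : MemLp a ∞)
    {c : ℝ≥0∞} (hc : c < eLpNorm a ∞) :
    ∃ u ρ, IsTestFunction u ∧ Function.support u ⊆ ball 0 ρ ∧ eLpNorm u p ≤ 1 ∧
      c ≤ eLpNorm (fourierMultiplier a u) p (volume.restrict (ball 0 ρ)) := by
  obtain ⟨u, ρ, hu, u_supp, u_ne_zero, c_mul_le⟩ :=
    exists_mul_eLpNorm_le_eLpNorm_fourierMultiplier hp ha hc
  have u_ne_top := (hu.memLp p).eLpNorm_ne_top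
  set t : ℂ := (((eLpNorm u p)⁻¹).toReal : ℂ)
  have enorm_t : ‖t‖ₑ = (eLpNorm u p)⁻¹ := by
    rw [← ofReal_norm, Complex.norm_of_nonneg ENNReal.toReal_nonneg,
      ENNReal.ofReal_toReal (ENNReal.inv_ne_top.2 u_ne_zero)]
  refine ⟨fun x => t * u x, ρ, hu.const_mul t,
    (Function.support_mul_subset_right _ u).trans u_supp, ?_, ?_⟩
  · refine (eLpNorm_const_smul t u p volume).trans_le ?_
    rw [enorm_t, ENNReal.inv_mul_cancel u_ne_zero u_ne_top]
  · rw [funext (fourierMultiplier_const_mul a t u)]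
    refine le_of_le_of_eq ?_ (eLpNorm_const_smul t (fourierMultiplier a u) p _).symm
    rwa [enorm_t, mul_comm, ← div_eq_mul_inv,
      ENNReal.le_div_iff_mul_le (Or.inl u_ne_zero) (Or.inl u_ne_top)]

end NearExtremizers

section Separation

theorem exists_separated_ball_subset {E : Type*} [NormedAddCommGroup E] [NormedSpace ℝ E]
    [Nontrivial E] {Ω : Set E} (hΩ : ∀ ρ : ℝ, ∃ y, ball y ρ ⊆ Ω) (ρ L : ℝ) (m : ℕ) :
    ∃ z : Fin m → E, (∀ i, ball (z i) ρ ⊆ Ω) ∧ Pairwise fun i j => L ≤ dist (z i) (z j) := by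
  obtain ⟨y, hy⟩ := hΩ (m * |L| + ρ)
  obtain ⟨e, he⟩ := exists_norm_eq E zero_le_one
  refine ⟨fun i => y + (i * |L| : ℝ) • e, fun i => (ball_subset_ball' ?_).trans hy, ?_⟩
  · have : (i : ℝ) ≤ m := by exact_mod_cast i.2.le
    rw [dist_self_add_left, norm_smul, he, mul_one, Real.norm_of_nonneg (by positivity), add_comm]
    gcongr
  · intro i j hij
    have one_le : (1 : ℝ) ≤ |(i : ℝ) - j| := by
      exact_mod_cast Int.one_le_abs (sub_ne_zero.2 (Int.ofNat_inj.not.2 (Fin.val_ne_of_ne hij)))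
    calc L ≤ |L| := le_abs_self L
      _ ≤ |(i : ℝ) - j| * |L| := le_mul_of_one_le_left (abs_nonneg L) one_le
      _ = dist (y + (i * |L| : ℝ) • e) (y + (j * |L| : ℝ) • e) := by
          rw [dist_add_left, dist_eq_norm, ← sub_smul, ← sub_mul, norm_smul, he, mul_one,
            norm_mul, Real.norm_eq_abs, Real.norm_eq_abs, abs_abs]

theorem eLpNorm_restrict_ball_le_eLpNorm_indicator_comp_sub {E F : Type*} [NormedAddCommGroup E]
    [MeasurableSpace E] [BorelSpace E] [NormedAddCommGroup F] {μ : Measure E}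
    [μ.IsAddRightInvariant] {p : ℝ≥0∞} (hp : 1 ≤ p) {h : E → F} (hh : AEStronglyMeasurable h μ)
    {K ρ η : ℝ} (hη : ∀ x, K ≤ ‖x‖ → ‖h x‖ ≤ η) {Ω : Set E} {z z' : E} (hz : ball z ρ ⊆ Ω)
    (hzz' : K + ρ ≤ dist z z') :
    eLpNorm h p (μ.restrict (ball 0 ρ)) ≤
      eLpNorm (Ω.indicator (fun x => h (x - z)) - Ω.indicator fun x => h (x - z')) p μ +
        μ (ball z ρ) ^ p.toReal⁻¹ * ENNReal.ofReal η := by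
  have far : ∀ x ∈ ball z ρ, ‖h (x - z')‖ ≤ η := by
    intro x hx
    refine hη _ ?_
    rw [← dist_eq_norm]
    linarith [dist_triangle_left z z' x, mem_ball.1 hx]
  have meas : ∀ w, AEStronglyMeasurable (fun x => h (x - w)) μ := fun w =>
    hh.comp_measurePreserving (measurePreserving_sub_right μ w)
  rw [← eLpNorm_comp_sub_restrict_ball hh z]
  refine (eLpNorm_restrict_le_add_of_norm_sub_le measurableSet_ball (meas z)
    ((meas z).sub (meas z')) hp fun x hx => by simpa using far x hx).trans ?_
  gcongr
  refine (eLpNorm_congr_ae ?_).trans_le (eLpNorm_restrict_le _ p μ _)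
  refine ae_restrict_of_forall_mem measurableSet_ball fun x hx => ?_
  simp only [Pi.sub_apply, Set.indicator_of_mem (hz hx)]

end Separation

theorem exists_ne_mem_of_card_lt {ι α : Type*} [Fintype ι] {𝒞 : Finset (Set α)}
    (hcard : 𝒞.card < Fintype.card ι) {f : ι → α} (hf : ∀ i, ∃ s ∈ 𝒞, f i ∈ s) :
    ∃ i j, i ≠ j ∧ ∃ s ∈ 𝒞, f i ∈ s ∧ f j ∈ s := by
  choose piece piece_mem mem_piece using hf
  obtain ⟨i, -, j, -, hij, same_piece⟩ := Finset.exists_ne_map_eq_of_card_lt_of_maps_to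
    (s := Finset.univ) hcard fun i _ => piece_mem i
  exact ⟨i, j, hij, piece i, piece_mem i, mem_piece i, same_piece ▸ mem_piece j⟩

section WienerHopf

variable {n : ℕ} {a : Eucl n → ℂ} {p : ℝ≥0∞} {Ω : Set (Eucl n)}

theorem wOp_ae_eq_indicator_fourierMultiplier (FP : FourierPlancherelPair n) (ha : MemLp a ∞)
    {v : Eucl n → ℂ} (hv : IsTestFunction v) (hvΩ : Function.support v ⊆ Ω)
    (hv2 : MemLp (Ω.indicator v) 2) :
    WOp FP a ha Ω v hv2 =ᵐ[volume] Ω.indicator (fourierMultiplier a v) := by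
  have toLp_eq : hv2.toLp _ = (hv.memLp 2).toLp v := by
    rw [MemLp.toLp_eq_toLp_iff, Set.indicator_eq_self.2 hvΩ]
  rw [WOp, toLp_eq]
  filter_upwards [finv_mulOp_f_ae_eq_fourierMultiplier FP ha hv] with x hx
  exact Set.indicator_eq_indicator Iff.rfl hx

theorem exists_forall_norm_fourierMultiplier_le (a v : Eucl n → ℂ) {η : ℝ} (hη : 0 < η) :
    ∃ K : ℝ, ∀ x, K ≤ ‖x‖ → ‖fourierMultiplier a v x‖ ≤ η := by
  have decay := (tendsto_fourierMultiplier_cocompact a v).norm.eventually_le_const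
    (norm_zero.trans_lt hη)
  rw [← cobounded_eq_cocompact, hasBasis_cobounded_norm.eventually_iff] at decay
  obtain ⟨K, -, hK⟩ := decay
  exact ⟨K, fun x hx => hK hx⟩

theorem exists_separated_fourierMultiplier (hn : 1 ≤ n) (hp : 1 ≤ p)
    (hΩ : ∀ ρ : ℝ, ∃ y, ball y ρ ⊆ Ω) (ha : MemLp a ∞) {c : ℝ≥0∞} (hc : c < eLpNorm a ∞)
    (m : ℕ) :
    ∃ u : Fin m → Eucl n → ℂ,
      (∀ i, IsTestFunction (u i) ∧ Function.support (u i) ⊆ Ω ∧ eLpNorm (u i) p ≤ 1) ∧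
      Pairwise fun i j => c ≤ eLpNorm
        (Ω.indicator (fourierMultiplier a (u i)) - Ω.indicator (fourierMultiplier a (u j))) p := by
  have : Nonempty (Fin n) := ⟨⟨0, hn⟩⟩
  obtain ⟨c', hcc', hc'⟩ := exists_between hc
  obtain ⟨v, ρ, hv, v_supp, v_le, c'_le⟩ := exists_le_eLpNorm_fourierMultiplier hp ha hc'
  have volume_ne_top : volume (ball (0 : Eucl n) ρ) ^ p.toReal⁻¹ ≠ ∞ :=
    ENNReal.rpow_ne_top_of_nonneg (inv_nonneg.2 ENNReal.toReal_nonneg) measure_ball_lt_top.ne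
  obtain ⟨η, hη, η_lt⟩ := ENNReal.exists_nnreal_pos_mul_lt volume_ne_top
    (tsub_pos_of_lt hcc').ne'
  obtain ⟨K, hK⟩ := exists_forall_norm_fourierMultiplier_le a v (NNReal.coe_pos.2 hη)
  obtain ⟨z, hzΩ, hz⟩ := exists_separated_ball_subset hΩ ρ (K + ρ) m
  refine ⟨fun i x => v (x - z i), fun i => ⟨hv.comp_sub (z i), fun x hx => hzΩ i ?_, ?_⟩, ?_⟩
  · rw [mem_ball_iff_norm, ← mem_ball_zero_iff]
    exact v_supp hx
  · exact (eLpNorm_comp_measurePreserving (hv.memLp p).1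
      (measurePreserving_sub_right volume (z i))).trans_le v_le
  · intro i j hij
    have separated := c'_le.trans (eLpNorm_restrict_ball_le_eLpNorm_indicator_comp_sub hp
      (continuous_fourierMultiplier ha hv).aestronglyMeasurable hK (hzΩ i) (hz hij))
    simp only [funext (fourierMultiplier_comp_sub a v _)]
    rw [Measure.addHaar_ball_center, ENNReal.ofReal_coe_nnreal, mul_comm] at separated
    refine (ENNReal.add_le_add_iff_right η_lt.ne_top).1 (le_trans ?_ separated)
    exact (add_comm _ _).trans_le (lt_tsub_iff_right.1 η_lt).le

theorem exists_separated_wOp (hn : 1 ≤ n) (hp : 1 ≤ p) (hΩ : ∀ ρ : ℝ, ∃ y, ball y ρ ⊆ Ω)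
    (FP : FourierPlancherelPair n) (ha : MemLp a ∞) {c : ℝ≥0∞} (hc : c < eLpNorm a ∞) (m : ℕ) :
    ∃ (u : Fin m → Eucl n → ℂ) (hu2 : ∀ i, MemLp (Ω.indicator (u i)) 2),
      (∀ i, MemLp (Ω.indicator (u i)) p ∧ eLpNorm (Ω.indicator (u i)) p ≤ 1) ∧
      Pairwise fun i j =>
        c ≤ eLpNorm (WOp FP a ha Ω (u i) (hu2 i) - WOp FP a ha Ω (u j) (hu2 j)) p := by
  obtain ⟨u, hu, separated⟩ := exists_separated_fourierMultiplier hn hp hΩ ha hc m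
  have indicator_eq (i) : Ω.indicator (u i) = u i := Set.indicator_eq_self.2 (hu i).2.1
  have hu2 (i) : MemLp (Ω.indicator (u i)) 2 := (indicator_eq i).symm ▸ (hu i).1.memLp 2
  refine ⟨u, hu2, fun i => ?_, fun i j hij => ?_⟩
  · rw [indicator_eq i]
    exact ⟨(hu i).1.memLp p, (hu i).2.2⟩
  · have image_ae (k) := wOp_ae_eq_indicator_fourierMultiplier FP ha (hu k).1 (hu k).2.1 (hu2 k)
    exact (separated hij).trans_eq (eLpNorm_congr_ae ((image_ae i).sub (image_ae j))).symm

end WienerHopf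

theorem kuratowski_lower_bound_general (n : ℕ) (hn : 1 ≤ n) (p : ℝ≥0∞) (hp1 : 1 ≤ p)
    (Ω : Set (Eucl n)) (hΩ : ∀ ρ : ℝ, ∃ y, ball y ρ ⊆ Ω)
    (a : Eucl n → ℂ) (ha : MemLp a ⊤ (volume : Measure (Eucl n)))
    (FP : FourierPlancherelPair n) :
    eLpNorm a ⊤ volume ≤
      sInf { r : ℝ≥0∞ |
        ∃ 𝒞 : Finset (Set (Eucl n → ℂ)),
          (∀ (u : Eucl n → ℂ) (hu2 : MemLp (Ω.indicator u) 2 (volume : Measure (Eucl n))),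
            MemLp (Ω.indicator u) p volume → eLpNorm (Ω.indicator u) p volume ≤ 1 →
              ∃ s ∈ 𝒞, WOp FP a ha Ω u hu2 ∈ s) ∧
          ∀ s ∈ 𝒞, ∀ f ∈ s, ∀ g ∈ s, eLpNorm (f - g) p volume ≤ r } := by
  refine le_sInf fun r hr => le_of_forall_lt_imp_le_of_dense fun c hc => ?_
  obtain ⟨𝒞, covers, diam_le⟩ := hr
  obtain ⟨u, hu2, hu, separated⟩ := exists_separated_wOp hn hp1 hΩ FP ha hc (𝒞.card + 1)
  have covered (i) := covers (u i) (hu2 i) (hu i).1 (hu i).2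
  obtain ⟨i, j, hij, s, hs, hi, hj⟩ := exists_ne_mem_of_card_lt (by simp) covered
  exact (separated hij).trans (diam_le s hs _ hi _ hj)

/-- lower bound for the Kuratowski measure of noncompactness of the image of
the unit ball of `L²(Ω) ∩ L^p(Ω)` under a Wiener–Hopf type operator.  The Kuratowski
measure is spelled out via covers by finitely many sets of diameter (in the `L^p`
pseudometric) at most `r`. -/
theorem kuratowski_lower_bound (n : ℕ) (hn : 1 ≤ n) (p : ℝ≥0∞) (hp1 : 1 ≤ p) (hp : p ≠ ∞)
    (Ω : Set (Eucl n)) (hΩ : MeasurableSet Ω)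
    (τ : ℝ) (hτ : 1 < τ) (y : ℕ → Eucl n) (R : ℕ → ℝ) (hRpos : ∀ j, 0 < R j)
    (hRmono : StrictMono R) (hRtop : Tendsto R atTop atTop)
    (hsub : ∀ j, Metric.ball (y j) (τ * R j) ⊆ Ω)
    (hdisj : ∀ j k, j ≠ k → Metric.ball (y j) (τ * R j) ∩ Metric.ball (y k) (τ * R k) = ∅)
    (a : Eucl n → ℂ) (ha : MemLp a ⊤ (volume : Measure (Eucl n)))
    (FP : FourierPlancherelPair n) (M : ℝ) (hM0 : 0 ≤ M)
    (hM : ∀ (u : Eucl n → ℂ) (hu2 : MemLp u 2 (volume : Measure (Eucl n))),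
      MemLp u p volume →
      eLpNorm (FP.Finv (mulOp a ha (FP.F (hu2.toLp u))) : Eucl n → ℂ) p volume
        ≤ ENNReal.ofReal M * eLpNorm u p volume) :
    eLpNorm a ⊤ volume ≤
      sInf { r : ℝ≥0∞ |
        ∃ 𝒞 : Finset (Set (Eucl n → ℂ)),
          (∀ (u : Eucl n → ℂ) (hu2 : MemLp (Ω.indicator u) 2 (volume : Measure (Eucl n))),
            MemLp (Ω.indicator u) p volume → eLpNorm (Ω.indicator u) p volume ≤ 1 →
              ∃ s ∈ 𝒞, WOp FP a ha Ω u hu2 ∈ s) ∧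
          ∀ s ∈ 𝒞, ∀ f ∈ s, ∀ g ∈ s, eLpNorm (f - g) p volume ≤ r } := by
  refine kuratowski_lower_bound_general n hn p hp1 Ω (fun ρ => ?_) a ha FP
  obtain ⟨j, hj⟩ := (hRtop.eventually_ge_atTop ρ).exists
  exact ⟨y j, (ball_subset_ball (hj.trans (le_mul_of_one_le_left (hRpos j).le hτ.le))).trans
    (hsub j)⟩
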